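/- arXiv:2512.21752 — 2 statements merged into one kernel-verified Lean document; each statement's English description precedes it below -/
import Mathlib

section
/- Let n be a natural number and p a real number with 1 < p < n. There exists a constant C > 0, depending only on n and p, such that for every measurable function g : EuclideanSpace ℝ (Fin n) → ℝ and every compactly supported continuously differentiable function u : EuclideanSpace ℝ (Fin n) → ℝ, one has (in the extended nonnegative reals) ∫ |g(x)|·|u(x)|^p dx ≤ C · W(g) · ∫ ‖Du(x)‖^p dx, where W(g) := sup over t > 0 of t·(volume {x : |g(x)| > t})^(p/n) is the weak L^(n/p) quasinorm and Du denotes the Fréchet derivative of u. -/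
open MeasureTheory Set

open Module
open scoped ENNReal NNReal

/-! Truncation argument of Maz'ya. A smooth cutoff of `u` between the levels `s / 2` and `s` has
derivative controlled, uniformly in `s`, by `Du` on the shell `s / 2 ≤ ‖u‖ < s`, so the Sobolev
inequality bounds `s ^ p * μ {s ≤ ‖u‖} ^ (1 - p / n)` by the energy of `u` on that shell. The dyadic
shells being disjoint, summing over `s = 2 ^ k` gives
`∑ 2 ^ (k * p) * μ {2 ^ k ≤ ‖u‖} ^ (1 - p / n) ≤ C * ∫ ‖Du‖ ^ p`, a bound for `‖u‖ ^ p` in the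
Lorentz space `L^{n/(n-p), 1}`. Its duality with weak `L^{n/p}` is Kolmogorov's bound for the
integral of `‖g‖` over each superlevel set of `u`. -/

section WeakLp

variable {X : Type*} [MeasurableSpace X]

theorem lintegral_ofReal_le_lintegral_meas_lt (μ : Measure X) (f : X → ℝ) :
    ∫⁻ x, ENNReal.ofReal (f x) ∂μ ≤ ∫⁻ t in Ioi (0 : ℝ), μ {x | t < f x} := by
  obtain ⟨φ, hφ, hφf, hint⟩ := exists_measurable_le_lintegral_eq μ fun x ↦ ENNReal.ofReal (f x)
  have φ_ne_top (x : X) : φ x ≠ ∞ := ne_top_of_le_ne_top ENNReal.ofReal_ne_top (hφf x)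
  calc
    ∫⁻ x, ENNReal.ofReal (f x) ∂μ = ∫⁻ x, ENNReal.ofReal (φ x).toReal ∂μ := by
      simp only [hint, ENNReal.ofReal_toReal (φ_ne_top _)]
    _ = ∫⁻ t in Ioi (0 : ℝ), μ {x | t < (φ x).toReal} :=
      lintegral_eq_lintegral_meas_lt μ (.of_forall fun _ ↦ ENNReal.toReal_nonneg)
        hφ.ennreal_toReal.aemeasurable
    _ ≤ ∫⁻ t in Ioi (0 : ℝ), μ {x | t < f x} := by
      refine setLIntegral_mono' measurableSet_Ioi fun t ht ↦ measure_mono fun x hx ↦ ?_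
      have htx : ENNReal.ofReal t < ENNReal.ofReal (f x) :=
        ((ENNReal.ofReal_lt_iff_lt_toReal (mem_Ioi.1 ht).le (φ_ne_top x)).2 hx).trans_le (hφf x)
      exact (ENNReal.ofReal_lt_ofReal_iff_of_nonneg (mem_Ioi.1 ht).le).1 htx

theorem lintegral_Ioi_ofReal_div_rpow {r w T : ℝ} (hr : 1 < r) (hw : 0 ≤ w) (hT : 0 < T) :
    ∫⁻ t in Ioi T, ENNReal.ofReal ((w / t) ^ r) =
      ENNReal.ofReal (w ^ r * T ^ (1 - r) / (r - 1)) := by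
  calc
    ∫⁻ t in Ioi T, ENNReal.ofReal ((w / t) ^ r)
        = ∫⁻ t in Ioi T, ENNReal.ofReal (w ^ r * t ^ (-r)) := by
      refine setLIntegral_congr_fun measurableSet_Ioi fun t ht ↦ ?_
      have ht0 : 0 ≤ t := (hT.trans ht).le
      simp only [Real.div_rpow hw ht0, Real.rpow_neg ht0, ← div_eq_mul_inv]
    _ = ENNReal.ofReal (∫ t in Ioi T, w ^ r * t ^ (-r)) := by
      refine (ofReal_integral_eq_lintegral_ofReal ?_ ?_).symm
      · exact (integrableOn_Ioi_rpow_of_lt (neg_lt_neg hr) hT).const_mul _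
      · refine ae_restrict_of_forall_mem measurableSet_Ioi fun t ht ↦ ?_
        have ht0 : 0 < t := hT.trans ht
        positivity
    _ = ENNReal.ofReal (w ^ r * T ^ (1 - r) / (r - 1)) := by
      rw [integral_const_mul, integral_Ioi_rpow_of_lt (neg_lt_neg hr) hT, neg_add_eq_sub,
        ← neg_sub r 1, neg_div_neg_eq, neg_sub, mul_div_assoc]

theorem lintegral_min_ofReal_div_rpow_le {r w e : ℝ} (hr : 1 < r) (hw : 0 < w) (he : 0 < e) :
    ∫⁻ t in Ioi (0 : ℝ), min (ENNReal.ofReal e) (ENNReal.ofReal ((w / t) ^ r)) ≤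
      ENNReal.ofReal (r / (r - 1) * w * e ^ (1 - r⁻¹)) := by
  have hr1 : 0 < r - 1 := sub_pos.2 hr
  -- The two terms of the minimum agree at `T`.
  set T : ℝ := w * e ^ (-r⁻¹) with hT
  have hT0 : 0 < T := by positivity
  have head : ∫⁻ t in Ioc 0 T, min (ENNReal.ofReal e) (ENNReal.ofReal ((w / t) ^ r)) ≤
      ENNReal.ofReal (e * T) :=
    calc
      _ ≤ ∫⁻ _ in Ioc 0 T, ENNReal.ofReal e := lintegral_mono fun _ ↦ min_le_left _ _
      _ = ENNReal.ofReal (e * T) := by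
        rw [setLIntegral_const, Real.volume_Ioc, sub_zero, ENNReal.ofReal_mul he.le]
  have tail : ∫⁻ t in Ioi T, min (ENNReal.ofReal e) (ENNReal.ofReal ((w / t) ^ r)) ≤
      ENNReal.ofReal (w ^ r * T ^ (1 - r) / (r - 1)) :=
    (lintegral_mono fun _ ↦ min_le_right _ _).trans_eq (lintegral_Ioi_ofReal_div_rpow hr hw.le hT0)
  have e_mul_T : e * T = w * e ^ (1 - r⁻¹) := by
    rw [hT, sub_eq_add_neg, Real.rpow_add he, Real.rpow_one]
    ring
  have w_mul_T : w ^ r * T ^ (1 - r) = w * e ^ (1 - r⁻¹) := by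
    rw [hT, Real.mul_rpow hw.le (by positivity), ← Real.rpow_mul he.le, ← mul_assoc,
      ← Real.rpow_add hw, add_sub_cancel, Real.rpow_one]
    congr 2
    field_simp
    ring
  calc
    _ = ∫⁻ t in Ioc 0 T ∪ Ioi T, min (ENNReal.ofReal e) (ENNReal.ofReal ((w / t) ^ r)) := by
      rw [Ioc_union_Ioi_eq_Ioi hT0.le]
    _ ≤ ENNReal.ofReal (e * T) + ENNReal.ofReal (w ^ r * T ^ (1 - r) / (r - 1)) :=
      (lintegral_union_le _ _ _).trans (add_le_add head tail)
    _ = ENNReal.ofReal (r / (r - 1) * w * e ^ (1 - r⁻¹)) := by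
      rw [← ENNReal.ofReal_add (by positivity) (by positivity), e_mul_T, w_mul_T]
      congr 1
      field_simp
      ring

theorem lintegral_min_div_rpow_le {r : ℝ} (hr : 1 < r) (w e : ℝ≥0∞) :
    ∫⁻ t in Ioi (0 : ℝ), min e ((w / ENNReal.ofReal t) ^ r) ≤
      ENNReal.ofReal (r / (r - 1)) * w * e ^ (1 - r⁻¹) := by
  have hr0 : 0 < r := by positivity
  have : 0 < r - 1 := sub_pos.2 hr
  have hexp : 0 < 1 - r⁻¹ := sub_pos.2 (inv_lt_one_of_one_lt₀ hr)
  have hconst : ENNReal.ofReal (r / (r - 1)) ≠ 0 := by simpa using by positivity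
  rcases eq_or_ne w 0 with rfl | hw0
  · simp [ENNReal.zero_rpow_of_pos hr0]
  rcases eq_or_ne e 0 with rfl | he0
  · simp
  rcases eq_or_ne w ∞ with rfl | hw
  · have e_rpow_ne_zero : e ^ (1 - r⁻¹) ≠ 0 := by
      simp [ENNReal.rpow_eq_zero_iff, he0, (inv_lt_one_of_one_lt₀ hr).le]
    simp [ENNReal.mul_top hconst, ENNReal.top_mul e_rpow_ne_zero]
  rcases eq_or_ne e ∞ with rfl | he
  · simp [ENNReal.top_rpow_of_pos hexp, ENNReal.mul_top (mul_ne_zero hconst hw0)]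
  have hw' := ENNReal.toReal_pos hw0 hw
  have he' := ENNReal.toReal_pos he0 he
  lift w to ℝ≥0 using hw
  lift e to ℝ≥0 using he
  rw [ENNReal.coe_toReal] at hw' he'
  calc
    ∫⁻ t in Ioi (0 : ℝ), min (e : ℝ≥0∞) ((w / ENNReal.ofReal t) ^ r)
        = ∫⁻ t in Ioi (0 : ℝ), min (ENNReal.ofReal e) (ENNReal.ofReal ((w / t) ^ r)) := by
      refine setLIntegral_congr_fun measurableSet_Ioi fun t (ht : 0 < t) ↦ ?_
      simp only [ENNReal.ofReal_coe_nnreal, ← ENNReal.ofReal_rpow_of_pos (div_pos hw' ht),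
        ENNReal.ofReal_div_of_pos ht]
    _ ≤ ENNReal.ofReal (r / (r - 1) * w * e ^ (1 - r⁻¹)) :=
      lintegral_min_ofReal_div_rpow_le hr hw' he'
    _ = ENNReal.ofReal (r / (r - 1)) * w * e ^ (1 - r⁻¹) := by
      rw [ENNReal.ofReal_mul (by positivity), ENNReal.ofReal_mul (by positivity),
        ← ENNReal.ofReal_rpow_of_pos he', ENNReal.ofReal_coe_nnreal, ENNReal.ofReal_coe_nnreal]

/-- The weak `L^r` quasinorm `sup_{t > 0} t * μ {‖g‖ > t} ^ (1 / r)`, with values in `ℝ≥0∞` so that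
it is defined for every `g`. For `r = n / p` it is the quantity `W(g)` of the Hardy–Sobolev
inequality. -/
noncomputable def weakLpNorm {G : Type*} [Norm G] (g : X → G) (r : ℝ) (μ : Measure X) : ℝ≥0∞ :=
  ⨆ t ∈ Ioi (0 : ℝ), ENNReal.ofReal t * μ {x | t < ‖g x‖} ^ r⁻¹

variable {G : Type*} [SeminormedAddCommGroup G] {r : ℝ}

theorem meas_lt_norm_le_weakLpNorm_div_rpow (μ : Measure X) (g : X → G) (hr : 0 < r) {t : ℝ}
    (ht : 0 < t) : μ {x | t < ‖g x‖} ≤ (weakLpNorm g r μ / ENNReal.ofReal t) ^ r := by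
  have h : ENNReal.ofReal t * μ {x | t < ‖g x‖} ^ r⁻¹ ≤ weakLpNorm g r μ :=
    le_iSup₂ (f := fun (t : ℝ) (_ : t ∈ Ioi 0) ↦ ENNReal.ofReal t * μ {x | t < ‖g x‖} ^ r⁻¹) t ht
  rwa [← ENNReal.rpow_inv_le_iff hr, ENNReal.le_div_iff_mul_le (.inl (by simpa using ht))
    (.inl ENNReal.ofReal_ne_top), mul_comm]

theorem setLIntegral_enorm_le_weakLpNorm_mul (μ : Measure X) (g : X → G) (hr : 1 < r)
    (E : Set X) :
    ∫⁻ x in E, ‖g x‖ₑ ∂μ ≤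
      ENNReal.ofReal (r / (r - 1)) * weakLpNorm g r μ * μ E ^ (1 - r⁻¹) := by
  calc
    ∫⁻ x in E, ‖g x‖ₑ ∂μ ≤ ∫⁻ t in Ioi (0 : ℝ), μ.restrict E {x | t < ‖g x‖} := by
      simpa only [ofReal_norm] using
        lintegral_ofReal_le_lintegral_meas_lt (μ.restrict E) fun x ↦ ‖g x‖
    _ ≤ ∫⁻ t in Ioi (0 : ℝ), min (μ E) ((weakLpNorm g r μ / ENNReal.ofReal t) ^ r) := by
      refine setLIntegral_mono' measurableSet_Ioi fun t ht ↦ le_min ?_ ?_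
      · exact (measure_mono (subset_univ _)).trans_eq (Measure.restrict_apply_univ E)
      · exact (Measure.restrict_apply_le _ _).trans
          (meas_lt_norm_le_weakLpNorm_div_rpow μ g (zero_lt_one.trans hr) ht)
    _ ≤ _ := lintegral_min_div_rpow_le hr _ _

end WeakLp

section Dyadic

variable {X : Type*} [MeasurableSpace X]

theorem lintegral_eq_add_add_tsum_Ico_zpow (μ : Measure X) (h : X → ℝ≥0∞) {f : X → ℝ≥0∞}
    (hf : Measurable f) {b : ℝ≥0} (hb : 1 < b) :
    ∫⁻ x, h x ∂μ = ∫⁻ x in f ⁻¹' {0}, h x ∂μ + ∫⁻ x in f ⁻¹' {∞}, h x ∂μ +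
      ∑' k : ℤ, ∫⁻ x in f ⁻¹' Ico ((b : ℝ≥0∞) ^ k) ((b : ℝ≥0∞) ^ (k + 1)), h x ∂μ := by
  have H := measure_eq_measure_preimage_add_measure_tsum_Ico_zpow (μ.withDensity h) hf .univ hb
  simpa only [univ_inter, withDensity_apply h .univ, Measure.restrict_univ,
    withDensity_apply h (hf (measurableSet_singleton _)),
    withDensity_apply h (hf measurableSet_Ico)] using H

theorem lintegral_mul_rpow_le_tsum (μ : Measure X) (h : X → ℝ≥0∞) {f : X → ℝ≥0∞}
    (hf : Measurable f) (hf_top : ∀ x, f x ≠ ∞) {p : ℝ} (hp : 0 < p) :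
    ∫⁻ x, h x * f x ^ p ∂μ ≤
      2 ^ p * ∑' k : ℤ, ((2 : ℝ≥0∞) ^ k) ^ p * ∫⁻ x in {x | 2 ^ k ≤ f x}, h x ∂μ := by
  have shell (k : ℤ) : ∫⁻ x in f ⁻¹' Ico (2 ^ k) (2 ^ (k + 1)), h x * f x ^ p ∂μ ≤
      2 ^ p * (((2 : ℝ≥0∞) ^ k) ^ p * ∫⁻ x in {x | 2 ^ k ≤ f x}, h x ∂μ) := by
    have pow_ne_top : ((2 : ℝ≥0∞) ^ (k + 1)) ^ p ≠ ∞ :=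
      ENNReal.rpow_ne_top_of_nonneg hp.le (ENNReal.zpow_ne_top two_ne_zero ENNReal.ofNat_ne_top _)
    calc
      _ ≤ ∫⁻ x in f ⁻¹' Ico (2 ^ k) (2 ^ (k + 1)), ((2 : ℝ≥0∞) ^ (k + 1)) ^ p * h x ∂μ := by
        refine setLIntegral_mono' (hf measurableSet_Ico) fun x hx ↦ ?_
        rw [mul_comm]
        gcongr
        exact hx.2.le
      _ ≤ ((2 : ℝ≥0∞) ^ (k + 1)) ^ p * ∫⁻ x in {x | 2 ^ k ≤ f x}, h x ∂μ := by
        rw [lintegral_const_mul' _ _ pow_ne_top]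
        gcongr
        exact fun x hx ↦ hx.1
      _ = _ := by
        rw [ENNReal.zpow_add two_ne_zero ENNReal.ofNat_ne_top, zpow_one,
          ENNReal.mul_rpow_of_nonneg _ _ hp.le, mul_comm (((2 : ℝ≥0∞) ^ k) ^ p), mul_assoc]
  have integral_zero : ∫⁻ x in f ⁻¹' {0}, h x * f x ^ p ∂μ = 0 := by
    rw [setLIntegral_congr_fun (hf (measurableSet_singleton 0)) (g := 0), Pi.zero_def,
      lintegral_zero]
    intro x hx
    simp [mem_singleton_iff.1 hx, ENNReal.zero_rpow_of_pos hp]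
  have preimage_top : f ⁻¹' {∞} = ∅ := preimage_singleton_eq_empty.2 fun ⟨x, hx⟩ ↦ hf_top x hx
  rw [lintegral_eq_add_add_tsum_Ico_zpow μ _ hf one_lt_two, integral_zero, preimage_top,
    setLIntegral_empty, add_zero, zero_add, ← ENNReal.tsum_mul_left]
  exact ENNReal.tsum_le_tsum shell

end Dyadic

section Cutoff

theorem fderiv_contDiffBump_eq_zero {F : Type*} [NormedAddCommGroup F] [NormedSpace ℝ F]
    [HasContDiffBump F] {c : F} (f : ContDiffBump c) {y : F} (hy : dist y c ∉ Ioo f.rIn f.rOut) :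
    fderiv ℝ f y = 0 := by
  refine IsLocalExtr.fderiv_eq_zero ?_
  rcases le_or_gt (dist y c) f.rIn with h_in | h_in
  · refine .inr (.of_forall fun z ↦ ?_)
    exact f.le_one.trans_eq (f.one_of_mem_closedBall h_in).symm
  · refine .inl (.of_forall fun z ↦ ?_)
    exact (f.zero_of_le_dist (not_lt.1 fun h_out ↦ hy ⟨h_in, h_out⟩)).trans_le f.nonneg

theorem exists_contDiff_cutoff (F : Type*) [NormedAddCommGroup F] [NormedSpace ℝ F]
    [FiniteDimensional ℝ F] :
    ∃ χ : F → ℝ, ContDiff ℝ 1 χ ∧ χ 0 = 0 ∧ (∀ y, 1 ≤ ‖y‖ → χ y = 1) ∧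
      (∀ y, ‖y‖ ∉ Ico 2⁻¹ 1 → fderiv ℝ χ y = 0) ∧ ∃ M : ℝ≥0, ∀ y, ‖fderiv ℝ χ y‖ₑ ≤ M := by
  let f : ContDiffBump (0 : F) := ⟨2⁻¹, 1, by norm_num, by norm_num⟩
  have fderiv_one_sub (y : F) : fderiv ℝ (fun z ↦ 1 - f z) y = -fderiv ℝ f y := fderiv_const_sub 1
  obtain ⟨M, hM⟩ := (f.hasCompactSupport.fderiv ℝ).exists_bound_of_continuous
    ((f.contDiff (n := 1)).continuous_fderiv one_ne_zero)
  refine ⟨fun y ↦ 1 - f y, contDiff_const.sub f.contDiff, ?_, fun y hy ↦ ?_, fun y hy ↦ ?_,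
    M.toNNReal, fun y ↦ ?_⟩
  · simp [f.eventuallyEq_one.eq_of_nhds]
  · simp [f.zero_of_le_dist (x := y) (by simpa [f] using hy)]
  · rw [fderiv_one_sub, fderiv_contDiffBump_eq_zero f, neg_zero]
    exact fun h ↦ hy (dist_zero_right y ▸ Ioo_subset_Ico_self h)
  · rw [fderiv_one_sub, enorm_neg, ← ofReal_norm]
    exact ENNReal.ofReal_le_ofReal (hM y)

theorem exists_contDiff_truncation (F : Type*) [NormedAddCommGroup F] [NormedSpace ℝ F]
    [FiniteDimensional ℝ F] :
    ∃ M : ℝ≥0, ∀ s : ℝ, 0 < s → ∃ χ : F → ℝ, ContDiff ℝ 1 χ ∧ χ 0 = 0 ∧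
      (∀ y, s ≤ ‖y‖ → χ y = s) ∧ (∀ y, ‖y‖ ∉ Ico (s / 2) s → fderiv ℝ χ y = 0) ∧
      ∀ y, ‖fderiv ℝ χ y‖ₑ ≤ M := by
  obtain ⟨χ, hχ, hχ_zero, hχ_one, hχ_fderiv, M, hM⟩ := exists_contDiff_cutoff F
  refine ⟨M, fun s hs ↦ ?_⟩
  have norm_scaled (y : F) : ‖s⁻¹ • y‖ = ‖y‖ / s := by
    rw [norm_smul, norm_inv, Real.norm_of_nonneg hs.le, div_eq_inv_mul]
  have hχs : ContDiff ℝ 1 fun y ↦ χ (s⁻¹ • y) := hχ.comp (contDiff_const_smul _)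
  have fderiv_scaled (y : F) : fderiv ℝ (fun z ↦ s * χ (s⁻¹ • z)) y = fderiv ℝ χ (s⁻¹ • y) := by
    rw [fderiv_const_mul (hχs.differentiable one_ne_zero y), fderiv_comp_smul,
      smul_inv_smul₀ hs.ne']
  refine ⟨fun y ↦ s * χ (s⁻¹ • y), contDiff_const.mul hχs, ?_, fun y hy ↦ ?_, fun y hy ↦ ?_,
    fun y ↦ ?_⟩
  · simp only [smul_zero, hχ_zero, mul_zero]
  · simp only [hχ_one (s⁻¹ • y) (by rwa [norm_scaled, one_le_div hs]), mul_one]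
  · rw [fderiv_scaled, hχ_fderiv]
    rwa [norm_scaled, mem_Ico, le_div_iff₀ hs, div_lt_one hs, inv_mul_eq_div]
  · rw [fderiv_scaled]
    exact hM _

end Cutoff

section Sobolev

theorem mul_meas_ge_rpow_inv_le_eLpNorm {X F : Type*} [MeasurableSpace X] [NormedAddCommGroup F]
    {μ : Measure X} {f : X → F} (hf : AEStronglyMeasurable f μ) {q : ℝ≥0∞} (hq : q ≠ 0)
    (hq_top : q ≠ ∞) (ε : ℝ≥0∞) :
    ε * μ {x | ε ≤ ‖f x‖ₑ} ^ q.toReal⁻¹ ≤ eLpNorm f q μ := by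
  have q_pos : 0 < q.toReal := ENNReal.toReal_pos hq hq_top
  have h := mul_meas_ge_le_pow_eLpNorm' μ hq hq_top hf ε
  rwa [← ENNReal.rpow_le_rpow_iff (inv_pos.2 q_pos), ENNReal.mul_rpow_of_nonneg _ _ (by positivity),
    ENNReal.rpow_rpow_inv q_pos.ne', ENNReal.rpow_rpow_inv q_pos.ne'] at h

variable {E : Type*} [NormedAddCommGroup E] [NormedSpace ℝ E] [MeasurableSpace E]
  {F : Type*} [NormedAddCommGroup F] [NormedSpace ℝ F] {p : ℝ}

theorem lintegral_enorm_fderiv_comp_rpow_le {G : Type*} [NormedAddCommGroup G] [NormedSpace ℝ G]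
    (μ : Measure E) {χ : F → G} (hχ : Differentiable ℝ χ) {w : E → F} (hw : Differentiable ℝ w)
    {A : Set F} (hA : MeasurableSet (w ⁻¹' A)) (hχA : ∀ y ∉ A, fderiv ℝ χ y = 0)
    {M : ℝ≥0} (hM : ∀ y, ‖fderiv ℝ χ y‖ₑ ≤ M) (hp : 0 < p) :
    ∫⁻ x, ‖fderiv ℝ (χ ∘ w) x‖ₑ ^ p ∂μ ≤ M ^ p * ∫⁻ x in w ⁻¹' A, ‖fderiv ℝ w x‖ₑ ^ p ∂μ := by
  have chain (x : E) : fderiv ℝ (χ ∘ w) x = (fderiv ℝ χ (w x)).comp (fderiv ℝ w x) :=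
    fderiv_comp x (hχ _) (hw x)
  have pointwise (x : E) : ‖fderiv ℝ (χ ∘ w) x‖ₑ ^ p ≤
      (w ⁻¹' A).indicator (fun x ↦ M ^ p * ‖fderiv ℝ w x‖ₑ ^ p) x := by
    by_cases hx : x ∈ w ⁻¹' A
    · rw [indicator_of_mem hx, ← ENNReal.mul_rpow_of_nonneg _ _ hp.le, chain]
      gcongr
      exact (ContinuousLinearMap.opENorm_comp_le _ _).trans (by gcongr; exact hM _)
    · rw [indicator_of_notMem hx, chain, hχA _ hx, ContinuousLinearMap.zero_comp, ← ofReal_norm,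
        norm_zero, ENNReal.ofReal_zero, ENNReal.zero_rpow_of_pos hp]
  calc
    _ ≤ ∫⁻ x, (w ⁻¹' A).indicator (fun x ↦ M ^ p * ‖fderiv ℝ w x‖ₑ ^ p) x ∂μ :=
      lintegral_mono pointwise
    _ = M ^ p * ∫⁻ x in w ⁻¹' A, ‖fderiv ℝ w x‖ₑ ^ p ∂μ := by
      rw [lintegral_indicator hA, lintegral_const_mul' _ _ (by simp [hp.le])]

variable [BorelSpace E] [FiniteDimensional ℝ E] (μ : Measure E) [μ.IsAddHaarMeasure]
  [FiniteDimensional ℝ F]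

variable (F) in
theorem exists_mul_meas_ge_rpow_le_lintegral_fderiv (hp : 1 ≤ p) (hpn : p < finrank ℝ E) :
    ∃ C : ℝ≥0, ∀ v : E → F, ContDiff ℝ 1 v → HasCompactSupport v → ∀ ε : ℝ≥0∞,
      ε ^ p * μ {x | ε ≤ ‖v x‖ₑ} ^ (1 - p / finrank ℝ E) ≤
        C * ∫⁻ x, ‖fderiv ℝ v x‖ₑ ^ p ∂μ := by
  have hp0 : 0 < p := by positivity
  have hn : 0 < finrank ℝ E := Nat.cast_pos.1 (hp0.trans hpn)
  obtain ⟨q, hq⟩ : ∃ q : ℝ, q = (p⁻¹ - (finrank ℝ E : ℝ)⁻¹)⁻¹ := ⟨_, rfl⟩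
  have hq0 : 0 < q := hq ▸ inv_pos.2 (sub_pos.2 (inv_strictAnti₀ hp0 hpn))
  have hexp : q⁻¹ * p = 1 - p / finrank ℝ E := by
    rw [hq, inv_inv]
    field_simp
  lift p to ℝ≥0 using hp0.le
  lift q to ℝ≥0 using hq0.le
  obtain ⟨S, hS⟩ : ∃ S : ℝ≥0, S = SNormLESNormFDerivOfEqConst F μ p := ⟨_, rfl⟩
  refine ⟨S ^ (p : ℝ), fun v hv hcv ε ↦ ?_⟩
  have chebyshev : ε * μ {x | ε ≤ ‖v x‖ₑ} ^ (q : ℝ)⁻¹ ≤ eLpNorm v q μ :=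
    mul_meas_ge_rpow_inv_le_eLpNorm hv.continuous.aestronglyMeasurable (mod_cast hq0.ne')
      ENNReal.coe_ne_top ε
  have sobolev : eLpNorm v q μ ≤ S * eLpNorm (fderiv ℝ v) p μ :=
    hS ▸ eLpNorm_le_eLpNorm_fderiv_of_eq μ hv hcv (mod_cast hp) hn
      (by rw [hq, inv_inv, NNReal.coe_inv])
  calc
    _ = (ε * μ {x | ε ≤ ‖v x‖ₑ} ^ (q : ℝ)⁻¹) ^ (p : ℝ) := by
      rw [ENNReal.mul_rpow_of_nonneg _ _ p.coe_nonneg, ← ENNReal.rpow_mul, hexp]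
    _ ≤ (S * eLpNorm (fderiv ℝ v) p μ) ^ (p : ℝ) :=
      ENNReal.rpow_le_rpow (chebyshev.trans sobolev) p.coe_nonneg
    _ = _ := by
      rw [ENNReal.mul_rpow_of_nonneg _ _ p.coe_nonneg, ENNReal.coe_rpow_of_nonneg _ p.coe_nonneg,
        eLpNorm_nnreal_pow_eq_lintegral (mod_cast hp0.ne')]

variable (F) in
theorem exists_mul_meas_ge_rpow_le_setLIntegral_fderiv (hp : 1 ≤ p) (hpn : p < finrank ℝ E) :
    ∃ C : ℝ≥0, ∀ u : E → F, ContDiff ℝ 1 u → HasCompactSupport u → ∀ s : ℝ, 0 < s →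
      ENNReal.ofReal s ^ p * μ {x | s ≤ ‖u x‖} ^ (1 - p / finrank ℝ E) ≤
        C * ∫⁻ x in {x | ‖u x‖ ∈ Ico (s / 2) s}, ‖fderiv ℝ u x‖ₑ ^ p ∂μ := by
  have hp0 : 0 < p := by positivity
  obtain ⟨M, hM⟩ := exists_contDiff_truncation F
  obtain ⟨S, hS⟩ := exists_mul_meas_ge_rpow_le_lintegral_fderiv ℝ μ hp hpn
  refine ⟨S * M ^ p, fun u hu hcu s hs ↦ ?_⟩
  obtain ⟨χ, hχ, hχ_zero, hχ_eq, hχ_fderiv, hχM⟩ := hM s hs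
  have measurableSet_shell : MeasurableSet {x | ‖u x‖ ∈ Ico (s / 2) s} :=
    hu.continuous.norm.measurable measurableSet_Ico
  calc
    ENNReal.ofReal s ^ p * μ {x | s ≤ ‖u x‖} ^ (1 - p / finrank ℝ E)
        ≤ ENNReal.ofReal s ^ p *
          μ {x | ENNReal.ofReal s ≤ ‖(χ ∘ u) x‖ₑ} ^ (1 - p / finrank ℝ E) := by
      have hexp : 0 ≤ 1 - p / finrank ℝ E := sub_nonneg.2 (div_le_one_of_le₀ hpn.le (by positivity))
      refine mul_right_mono (ENNReal.rpow_le_rpow (measure_mono fun x (hx : s ≤ ‖u x‖) ↦ ?_) hexp)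
      simp [hχ_eq _ hx, Real.enorm_of_nonneg hs.le]
    _ ≤ S * ∫⁻ x, ‖fderiv ℝ (χ ∘ u) x‖ₑ ^ p ∂μ :=
      hS (χ ∘ u) (hχ.comp hu) (hcu.comp_left hχ_zero) (ENNReal.ofReal s)
    _ ≤ S * (M ^ p * ∫⁻ x in {x | ‖u x‖ ∈ Ico (s / 2) s}, ‖fderiv ℝ u x‖ₑ ^ p ∂μ) := by
      gcongr
      exact lintegral_enorm_fderiv_comp_rpow_le μ (hχ.differentiable one_ne_zero)
        (hu.differentiable one_ne_zero) (A := {y | ‖y‖ ∈ Ico (s / 2) s})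
        measurableSet_shell hχ_fderiv hχM hp0
    _ = _ := by
      rw [ENNReal.coe_mul, ENNReal.coe_rpow_of_nonneg _ hp0.le, mul_assoc]

variable (F) in
theorem exists_tsum_zpow_mul_meas_ge_rpow_le (hp : 1 ≤ p) (hpn : p < finrank ℝ E) :
    ∃ C : ℝ≥0, ∀ u : E → F, ContDiff ℝ 1 u → HasCompactSupport u →
      ∑' k : ℤ, ((2 : ℝ≥0∞) ^ k) ^ p * μ {x | 2 ^ k ≤ ‖u x‖ₑ} ^ (1 - p / finrank ℝ E) ≤
        C * ∫⁻ x, ‖fderiv ℝ u x‖ₑ ^ p ∂μ := by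
  obtain ⟨C, hC⟩ := exists_mul_meas_ge_rpow_le_setLIntegral_fderiv F μ hp hpn
  refine ⟨C, fun u hu hcu ↦ ?_⟩
  have ofReal_two_zpow (k : ℤ) : ENNReal.ofReal (2 ^ k) = 2 ^ k := by
    rw [← Real.rpow_intCast, ← ENNReal.ofReal_rpow_of_pos two_pos, ENNReal.ofReal_ofNat,
      ENNReal.rpow_intCast]
  have two_zpow_le_enorm (k : ℤ) (x : E) : 2 ^ k ≤ ‖u x‖ₑ ↔ 2 ^ k ≤ ‖u x‖ := by
    rw [← ofReal_two_zpow, ← ofReal_norm, ENNReal.ofReal_le_ofReal_iff (norm_nonneg _)]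
  have level (k : ℤ) : ((2 : ℝ≥0∞) ^ (k + 1)) ^ p *
        μ {x | 2 ^ (k + 1) ≤ ‖u x‖ₑ} ^ (1 - p / finrank ℝ E) ≤
      C * ∫⁻ x in (‖u ·‖ₑ) ⁻¹' Ico (2 ^ k) (2 ^ (k + 1)), ‖fderiv ℝ u x‖ₑ ^ p ∂μ := by
    have half : (2 : ℝ) ^ (k + 1) / 2 = 2 ^ k := by
      rw [zpow_add_one₀ two_ne_zero, mul_div_cancel_right₀ _ two_ne_zero]
    simpa only [half, ofReal_two_zpow, two_zpow_le_enorm, ← not_le, preimage, mem_Ico] using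
      hC u hu hcu (2 ^ (k + 1)) (by positivity)
  rw [← (Equiv.addRight (1 : ℤ)).tsum_eq]
  calc
    _ ≤ ∑' k : ℤ, C * ∫⁻ x in (‖u ·‖ₑ) ⁻¹' Ico (2 ^ k) (2 ^ (k + 1)), ‖fderiv ℝ u x‖ₑ ^ p ∂μ :=
      ENNReal.tsum_le_tsum level
    _ ≤ C * ∫⁻ x, ‖fderiv ℝ u x‖ₑ ^ p ∂μ := by
      rw [ENNReal.tsum_mul_left,
        lintegral_eq_add_add_tsum_Ico_zpow μ _ hu.continuous.enorm.measurable one_lt_two]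
      gcongr
      exact le_add_self

end Sobolev

section HardySobolev

theorem lintegral_enorm_mul_rpow_le_weakLpNorm_mul_tsum {X G : Type*} [MeasurableSpace X]
    [SeminormedAddCommGroup G] (μ : Measure X) (g : X → G) {f : X → ℝ≥0∞} (hf : Measurable f)
    (hf_top : ∀ x, f x ≠ ∞) {p r : ℝ} (hp : 0 < p) (hr : 1 < r) :
    ∫⁻ x, ‖g x‖ₑ * f x ^ p ∂μ ≤ 2 ^ p * ENNReal.ofReal (r / (r - 1)) * weakLpNorm g r μ *
      ∑' k : ℤ, ((2 : ℝ≥0∞) ^ k) ^ p * μ {x | 2 ^ k ≤ f x} ^ (1 - r⁻¹) := by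
  calc
    _ ≤ 2 ^ p * ∑' k : ℤ, ((2 : ℝ≥0∞) ^ k) ^ p * ∫⁻ x in {x | 2 ^ k ≤ f x}, ‖g x‖ₑ ∂μ :=
      lintegral_mul_rpow_le_tsum μ _ hf hf_top hp
    _ ≤ 2 ^ p * ∑' k : ℤ, ((2 : ℝ≥0∞) ^ k) ^ p * (ENNReal.ofReal (r / (r - 1)) *
        weakLpNorm g r μ * μ {x | 2 ^ k ≤ f x} ^ (1 - r⁻¹)) := by
      gcongr
      exact setLIntegral_enorm_le_weakLpNorm_mul μ g hr _
    _ = _ := by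
      simp only [mul_left_comm _ (_ * weakLpNorm g r μ), ENNReal.tsum_mul_left]
      ring

theorem generalized_hardy_sobolev_general {E F G : Type*} [NormedAddCommGroup E] [NormedSpace ℝ E]
    [FiniteDimensional ℝ E] [MeasurableSpace E] [BorelSpace E] [NormedAddCommGroup F]
    [NormedSpace ℝ F] [FiniteDimensional ℝ F] [SeminormedAddCommGroup G] (μ : Measure E)
    [μ.IsAddHaarMeasure] {p : ℝ} (hp : 1 ≤ p) (hpn : p < finrank ℝ E) :
    ∃ C : ℝ, 0 < C ∧ ∀ (g : E → G) (u : E → F), ContDiff ℝ 1 u → HasCompactSupport u →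
      ∫⁻ x, ENNReal.ofReal (‖g x‖ * ‖u x‖ ^ p) ∂μ ≤
        ENNReal.ofReal C * weakLpNorm g (finrank ℝ E / p) μ *
          ∫⁻ x, ENNReal.ofReal (‖fderiv ℝ u x‖ ^ p) ∂μ := by
  have hp0 : 0 < p := by positivity
  obtain ⟨K, hK⟩ := exists_tsum_zpow_mul_meas_ge_rpow_le F μ hp hpn
  obtain ⟨r, hr⟩ : ∃ r : ℝ, r = finrank ℝ E / p := ⟨_, rfl⟩
  have one_lt_r : 1 < r := hr ▸ (one_lt_div hp0).2 hpn
  have : 0 < r - 1 := sub_pos.2 one_lt_r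
  refine ⟨2 ^ p * (r / (r - 1)) * (K + 1), by positivity, fun g u hu hcu ↦ ?_⟩
  simp only [ENNReal.ofReal_mul (norm_nonneg _), ← ENNReal.ofReal_rpow_of_nonneg (norm_nonneg _)
    hp0.le, ofReal_norm, ← hr]
  calc
    ∫⁻ x, ‖g x‖ₑ * ‖u x‖ₑ ^ p ∂μ
        ≤ 2 ^ p * ENNReal.ofReal (r / (r - 1)) * weakLpNorm g r μ *
          ∑' k : ℤ, ((2 : ℝ≥0∞) ^ k) ^ p * μ {x | 2 ^ k ≤ ‖u x‖ₑ} ^ (1 - r⁻¹) :=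
      lintegral_enorm_mul_rpow_le_weakLpNorm_mul_tsum μ g hu.continuous.enorm.measurable
        (fun _ ↦ enorm_ne_top) hp0 one_lt_r
    _ ≤ 2 ^ p * ENNReal.ofReal (r / (r - 1)) * weakLpNorm g r μ *
          ((K + 1 : ℝ≥0) * ∫⁻ x, ‖fderiv ℝ u x‖ₑ ^ p ∂μ) := by
      rw [hr, inv_div]
      gcongr
      exact (hK u hu hcu).trans (by gcongr; exact le_self_add)
    _ = _ := by
      have hK1 : ENNReal.ofReal (K + 1) = (K + 1 : ℝ≥0) := ENNReal.ofReal_coe_nnreal (p := K + 1)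
      rw [ENNReal.ofReal_mul (by positivity), ENNReal.ofReal_mul (by positivity), hK1,
        ← ENNReal.ofReal_rpow_of_pos two_pos, ENNReal.ofReal_ofNat]
      ring

end HardySobolev

/-- Generalized Hardy–Sobolev inequality for the weak `L^{n/p}` quasinorm
(Lemma 2.2 of the paper), stated for compactly supported `C^1` functions. -/
theorem generalized_hardy_sobolev (n : ℕ) (p : ℝ) (hp : 1 < p) (hpn : p < n) :
    ∃ C : ℝ, 0 < C ∧
      ∀ g : EuclideanSpace ℝ (Fin n) → ℝ, Measurable g →
      ∀ u : EuclideanSpace ℝ (Fin n) → ℝ, ContDiff ℝ 1 u → HasCompactSupport u →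
        ∫⁻ x, ENNReal.ofReal (|g x| * |u x| ^ p) ≤
          ENNReal.ofReal C *
            (⨆ t ∈ Set.Ioi (0 : ℝ),
              ENNReal.ofReal t * (volume {x : EuclideanSpace ℝ (Fin n) | t < |g x|}) ^ (p / n)) *
            ∫⁻ x, ENNReal.ofReal (‖fderiv ℝ u x‖ ^ p) := by
  obtain ⟨C, hC, h⟩ := generalized_hardy_sobolev_general (E := EuclideanSpace ℝ (Fin n)) (F := ℝ)
    (G := ℝ) volume hp.le (by simpa using hpn)
  exact ⟨C, hC, fun g _ ↦ by
    simpa only [weakLpNorm, Real.norm_eq_abs, inv_div, finrank_euclideanSpace_fin] using h g⟩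
end

section
/- Let N be a natural number and p a real number with 1 < p < N, and let r_* > 1. Let φ : ℝ → ℝ be differentiable on a neighborhood of r_* with φ'(r_*) = 0, and define F(r) := r^(N−1)·sign(φ'(r))·|φ'(r)|^(p−1). Assume F is differentiable at r_* with derivative F'(r_*) < 0. Then there exist constants c₀ > 0 and ρ₀ > 0 such that for all real r with |r − r_*| < ρ₀: |φ'(r)| ≥ c₀·|r − r_*|^(1/(p−1)). -/
open Real Set

/-- The radial quantity `F(r) = r^(N-1) |φ'(r)|^(p-2) φ'(r)`, written with
real exponents via the sign function. -/
noncomputable def radialF (N : ℕ) (p : ℝ) (φ : ℝ → ℝ) (r : ℝ) : ℝ :=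
  r ^ ((N : ℝ) - 1) * Real.sign (deriv φ r) * |deriv φ r| ^ (p - 1)

/-!
A function `F` with a simple zero at `x₀` satisfies `x - x₀ = O(F x)` near `x₀`. If moreover
`F = O(|g|^q)`, as for `F = w · sign g · |g|^q` with a locally bounded weight `w`, then
`x - x₀ = O(|g x|^q)`, and taking `q`-th roots gives `|x - x₀|^(1/q) = O(|g x|)`.
-/

open Asymptotics Filter
open scoped Topology

theorem abs_sign_le_one (t : ℝ) : |Real.sign t| ≤ 1 := by
  rcases Real.sign_apply_eq t with h | h | h <;> simp [h]

theorem isBigO_sub_of_hasDerivAt_of_eq_zero {𝕜 E : Type*} [NontriviallyNormedField 𝕜]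
    [NormedAddCommGroup E] [NormedSpace 𝕜 E] {f : 𝕜 → E} {f' : E} {x₀ : 𝕜}
    (hf : HasDerivAt f f' x₀) (hf' : f' ≠ 0) (hx₀ : f x₀ = 0) :
    (fun x => x - x₀) =O[𝓝 x₀] f := by
  have hsub := (HasDerivAtFilter.isTheta_sub hf hf').isBigO_symm
  simpa only [prod_pure, isBigO_map, Function.comp_def, hx₀, sub_zero] using hsub

section IsBigO

variable {α : Type*} {l : Filter α}

theorem isBigO_norm_rpow_one_div_of_isBigO_norm_rpow {E G : Type*} [SeminormedAddCommGroup E]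
    [SeminormedAddCommGroup G] {f : α → E} {g : α → G} {q : ℝ} (hq : 0 < q)
    (h : f =O[l] fun x => ‖g x‖ ^ q) :
    (fun x => ‖f x‖ ^ (1 / q)) =O[l] g := by
  have hroot := h.norm_left.rpow (one_div_nonneg.2 hq.le)
    (Eventually.of_forall fun x => rpow_nonneg (norm_nonneg (g x)) q)
  simpa only [one_div, rpow_rpow_inv (norm_nonneg _) hq.ne', isBigO_norm_right] using hroot

theorem isBigO_mul_sign_mul_abs_rpow {w : α → ℝ} (hw : w =O[l] fun _ => (1 : ℝ)) (g : α → ℝ)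
    (q : ℝ) : (fun x => w x * Real.sign (g x) * |g x| ^ q) =O[l] fun x => |g x| ^ q := by
  have hsign : (fun x => Real.sign (g x)) =O[l] fun _ => (1 : ℝ) :=
    .of_norm_le fun x => abs_sign_le_one (g x)
  simpa only [one_mul] using (hw.mul hsign).mul (isBigO_refl (fun x => |g x| ^ q) l)

end IsBigO

theorem critical_point_nondegeneracy_general {w g : ℝ → ℝ} {q x₀ F' : ℝ} (hq : 0 < q)
    (hw : w =O[𝓝 x₀] fun _ => (1 : ℝ)) (hg : g x₀ = 0)
    (hF : HasDerivAt (fun x => w x * Real.sign (g x) * |g x| ^ q) F' x₀) (hF' : F' ≠ 0) :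
    ∃ c₀ > (0 : ℝ), ∃ ρ₀ > (0 : ℝ), ∀ x : ℝ, |x - x₀| < ρ₀ →
      c₀ * |x - x₀| ^ (1 / q) ≤ |g x| := by
  have hsub : (fun x => x - x₀) =O[𝓝 x₀] fun x => w x * Real.sign (g x) * |g x| ^ q :=
    isBigO_sub_of_hasDerivAt_of_eq_zero hF hF' (by simp [hg])
  have hroot : (fun x => ‖x - x₀‖ ^ (1 / q)) =O[𝓝 x₀] g :=
    isBigO_norm_rpow_one_div_of_isBigO_norm_rpow hq
      (hsub.trans (isBigO_mul_sign_mul_abs_rpow hw g q))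
  obtain ⟨c₀, hc₀, hbound⟩ := isBigO_iff''.1 hroot
  obtain ⟨ρ₀, hρ₀, hball⟩ := Metric.eventually_nhds_iff.1 hbound
  refine ⟨c₀, hc₀, ρ₀, hρ₀, fun x hx => ?_⟩
  simpa only [norm_eq_abs, abs_rpow_of_nonneg (abs_nonneg _), abs_abs] using hball hx

/-- Non-degeneracy of the critical point (Lemma 3.1): near `r_*` one has
`|φ'(r)| ≥ c₀ |r - r_*|^(1/(p-1))`. -/
theorem critical_point_nondegeneracy (N : ℕ) (p : ℝ) (hp : 1 < p) (hpN : p < N)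
    (rstar : ℝ) (hrstar : 1 < rstar) (φ : ℝ → ℝ)
    (hφdiff : ∃ ε > (0 : ℝ), ∀ r : ℝ, |r - rstar| < ε → DifferentiableAt ℝ φ r)
    (hcrit : deriv φ rstar = 0)
    (hFdiff : DifferentiableAt ℝ (radialF N p φ) rstar)
    (hF' : deriv (radialF N p φ) rstar < 0) :
    ∃ c₀ > (0 : ℝ), ∃ ρ₀ > (0 : ℝ), ∀ r : ℝ, |r - rstar| < ρ₀ →
      c₀ * |r - rstar| ^ (1 / (p - 1)) ≤ |deriv φ r| :=
  have hweight : ContinuousAt (fun r : ℝ => r ^ ((N : ℝ) - 1)) rstar :=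
    continuousAt_rpow_const _ _ (.inl (zero_lt_one.trans hrstar).ne')
  critical_point_nondegeneracy_general (sub_pos.2 hp) (hweight.isBigO_one ℝ) hcrit
    hFdiff.hasDerivAt hF'.ne
end
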